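/- Exhaustive application of the pure literal rule is not symmetry-lifting: there exist CNF formulas F and F' such that F' is obtained from F by applying the pure rule exhaustively and some semantic symmetry of F', extended by the identity on Lit(F) ∖ Lit(F'), is not a semantic symmetry of F (witnessed by F = (x∨z)∧(ȳ∨z)∧(ȳ∨z̄)∧(y∨b)∧(y∨a)∧(y∨b)∧(ȳ∨ā∨b̄) with pure literal x, where after removing x the transposition exchanging z and z̄ is a syntactic and hence semantic symmetry of F', but is not a semantic symmetry of F). -/

import Mathlib

/-- A literal over a variable type `V`: a variable or its negation. -/
inductive Lit (V : Type) where
  | pos : V → Lit V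
  | neg : V → Lit V
deriving DecidableEq

variable {V : Type} [DecidableEq V]

/-- Negation of a literal (so that double negation is the identity). -/
def Lit.negate : Lit V → Lit V
  | .pos v => .neg v
  | .neg v => .pos v

/-- The underlying variable of a literal. -/
def Lit.var : Lit V → V
  | .pos v => v
  | .neg v => v

/-- A clause is a finite set of literals. -/
abbrev Clause (V : Type) := Finset (Lit V)

/-- A CNF formula is a finite set of clauses. -/
abbrev CNF (V : Type) := Finset (Clause V)

/-- `Var(F)`: the variables occurring in a formula. -/
def CNF.vars (F : CNF V) : Finset V := Finset.sup F (fun C => Finset.image Lit.var C)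

/-- `Lit(F) = Var(F) ∪ {v̄ : v ∈ Var(F)}`. -/
def CNF.lits (F : CNF V) : Finset (Lit V) :=
  Finset.image Lit.pos (CNF.vars F) ∪ Finset.image Lit.neg (CNF.vars F)

/-- The value of a literal under a complete assignment (given on the variables,
which determines a consistent complete assignment on all literals). -/
def Lit.val (σ : V → Bool) : Lit V → Bool
  | .pos v => σ v
  | .neg v => !(σ v)

/-- `C[σ]`: delete from `C` every literal mapped to `⊥` by `σ`
(i.e. keep `l` with `¬l ∉ σ`). -/
def Clause.reduce (σ : V → Bool) (C : Clause V) : Clause V :=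
  Finset.filter (fun l => Lit.val σ (Lit.negate l) = false) C

/-- `F[σ]`: delete every clause containing a literal mapped to `⊤` by `σ`
(for a complete assignment: every clause containing no false literal is kept)
and delete from each remaining clause every literal mapped to `⊥`. -/
def CNF.reduce (F : CNF V) (σ : V → Bool) : CNF V :=
  Finset.image (Clause.reduce σ) (Finset.filter (fun C => ∀ l ∈ C, Lit.val σ l = false) F)

/-- Apply a map on literals elementwise to clauses and formulas. -/
def CNF.map (φ : Lit V → Lit V) (F : CNF V) : CNF V :=
  Finset.image (fun C => Finset.image φ C) F

/-- `φ` is a syntactic symmetry of `F`: a bijection of `Lit(F)` respecting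
negation with `φ(F) = F`. -/
def IsSynSym (F : CNF V) (φ : Lit V → Lit V) : Prop :=
  Set.BijOn φ (CNF.lits F : Set (Lit V)) (CNF.lits F : Set (Lit V)) ∧
  (∀ l ∈ CNF.lits F, φ (Lit.negate l) = Lit.negate (φ l)) ∧
  CNF.map φ F = F

/-- `φ` is a semantic symmetry of `F`: a bijection of `Lit(F)` respecting
negation with `F[σ] = φ(F)[σ]` for every complete assignment `σ`. -/
def IsSemSym (F : CNF V) (φ : Lit V → Lit V) : Prop :=
  Set.BijOn φ (CNF.lits F : Set (Lit V)) (CNF.lits F : Set (Lit V)) ∧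
  (∀ l ∈ CNF.lits F, φ (Lit.negate l) = Lit.negate (φ l)) ∧
  ∀ σ : V → Bool, CNF.reduce F σ = CNF.reduce (CNF.map φ F) σ

/-- Extend a map defined on the literal set `S` by the identity outside `S`. -/
def extendId (S : Finset (Lit V)) (φ : Lit V → Lit V) : Lit V → Lit V :=
  fun l => if l ∈ S then φ l else l

/-- `F[l ↦ ⊤]`: delete every clause containing `l` and delete `l̄` from every
remaining clause. -/
def CNF.assignTrue (F : CNF V) (l : Lit V) : CNF V :=
  Finset.image (fun C => Finset.erase C (Lit.negate l)) (Finset.filter (fun C => l ∉ C) F)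

/-- One application of the pure literal rule: if `l ∈ Lit(F)` and no clause of
`F` contains `l̄`, replace `F` by `F[l ↦ ⊤]`. -/
def PureStep (F F' : CNF V) : Prop :=
  ∃ l : Lit V, l ∈ CNF.lits F ∧ (∀ C ∈ F, Lit.negate l ∉ C) ∧ F' = CNF.assignTrue F l

/-- The formula obtained after removing the pure literal (y, z, a, b are 1, 2, 3, 4). -/
def witF' : CNF ℕ :=
  {{.neg 1, .pos 2}, {.neg 1, .neg 2}, {.pos 1, .pos 4}, {.pos 1, .pos 3},
    {.neg 1, .neg 3, .neg 4}}

/-- The witness formula; x is 0. -/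
def witF : CNF ℕ := insert {.pos 0, .pos 2} witF'

/-- The transposition exchanging z and its negation. -/
def witPhi (l : Lit ℕ) : Lit ℕ := if l.var = 2 then l.negate else l

/-- Exhaustive application of the pure literal rule is not
symmetry-lifting: there are CNF formulas `F, F'` such that `F'` is obtained
from `F` by exhaustively applying the pure rule, and some semantic symmetry of
`F'`, extended by the identity on `Lit(F) ∖ Lit(F')`, is not a semantic
symmetry of `F`. -/
theorem exhaustive_pure_not_symmetry_lifting :
    ∃ F F' : CNF ℕ,
      Relation.ReflTransGen PureStep F F' ∧
      (¬ ∃ l : Lit ℕ, l ∈ CNF.lits F' ∧ ∀ C ∈ F', Lit.negate l ∉ C) ∧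
      ∃ φ : Lit ℕ → Lit ℕ, IsSemSym F' φ ∧
        ¬ IsSemSym F (extendId (CNF.lits F') φ) := by
  refine ⟨witF, witF', .single ⟨.pos 0, by decide, by decide, by decide⟩, ?_, witPhi, ?_, ?_⟩
  · rintro ⟨l, hl, h⟩
    have key : ∀ l ∈ CNF.lits witF', ∃ C ∈ witF', Lit.negate l ∈ C := by decide
    obtain ⟨C, hC, hm⟩ := key l hl
    exact h C hC hm
  · have hmaps : ∀ l ∈ CNF.lits witF', witPhi l ∈ CNF.lits witF' := by decide
    have hinv : ∀ l ∈ CNF.lits witF', witPhi (witPhi l) = l := by decide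
    have hmap : CNF.map witPhi witF' = witF' := by decide
    refine ⟨⟨fun l hl => hmaps l hl, ?_, ?_⟩, by decide, fun σ => by rw [hmap]⟩
    · intro a ha b hb hab
      rw [← hinv a ha, ← hinv b hb, hab]
    · intro a ha
      exact ⟨witPhi a, hmaps a ha, hinv a ha⟩
  · rintro ⟨-, -, h⟩
    have h1 := h (fun n => decide (2 ≤ n))
    revert h1
    decide
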